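/- Let G be a connected simple graph with n ≥ 2 vertices and m ≥ 1 edges, and let S ⊆ V(G) with |S| = σ. Then the number of closed 4-walks of G_S satisfies Tr(A(G_S)^4) = σ + 2(M₁(G) − m) + 6·∑_{v∈S} d_G(v) − 2·∑_{v∈S} n₁(v) + 8·(n_{△1}(G_S) + 2·n_{△2}(G_S) + 3·n_{△3}(G_S) + n_□(G) + 3·n_⊠(G)). -/

import Mathlib

open Finset Matrix BigOperators

/-!
Since `D_S² = D_S` and traces are cyclic, `Tr (A + D_S)⁴` collapses to six cyclic words. The words
containing `D_S` are sums of diagonal entries over `S`: `(A²)ᵥᵥ` is the degree, `(A D_S A)ᵥᵥ`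
counts the neighbours in `S`, and `(A³)ᵥᵥ` is twice the number of triangles at `v`. For the
remaining word, `Tr A⁴ = ∑ c(x, z)²`, where `c(x, z)` is the number of common neighbours. Writing
`c² = c + c (c - 1)` off the diagonal separates the walks that turn back, counted through
`∑ c = ∑ d²`, from the labelled 4-cycles, which are a pair of distinct corners `(x, z)` with two
distinct common neighbours. Finally every 4-clique carries `4! = 8 · 3` labelled 4-cycles.
-/

section Counting

variable {ι α M : Type*}

lemma forall_zmod_four {p : ZMod 4 → Prop} : (∀ i, p i) ↔ p 0 ∧ p 1 ∧ p 2 ∧ p 3 :=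
  ⟨fun h => ⟨h 0, h 1, h 2, h 3⟩, fun ⟨h0, h1, h2, h3⟩ (i : Fin 4) =>
    match i with
    | 0 => h0
    | 1 => h1
    | 2 => h2
    | 3 => h3⟩

lemma card_offDiag_add_card (s : Finset α) : #s.offDiag + #s = #s ^ 2 := by
  rw [offDiag_card, Nat.sub_add_cancel (Nat.le_mul_self _), sq]

lemma sum_eq_sum_range_mul_card_filter_eq {s : Finset ι} {f : ι → ℕ} {n : ℕ}
    (hf : ∀ i ∈ s, f i < n) : ∑ i ∈ s, f i = ∑ r ∈ range n, r * #{i ∈ s | f i = r} := by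
  rw [← sum_fiberwise_of_maps_to' (fun i hi => mem_range.2 (hf i hi)) fun r => r]
  simp only [sum_const, smul_eq_mul, mul_comm]

lemma sum_product_self_eq_sum_add_sum_offDiag [AddCommMonoid M] (s : Finset α) (f : α × α → M) :
    ∑ p ∈ s ×ˢ s, f p = ∑ a ∈ s, f (a, a) + ∑ p ∈ s.offDiag, f p := by
  classical
  rw [← diag_union_offDiag, sum_union (disjoint_diag_offDiag s), sum_diag]

variable [DecidableEq α]

lemma sum_card_filter_mem_eq_sum_card_inter (s : Finset α) (F : Finset (Finset α)) :
    ∑ a ∈ s, #{T ∈ F | a ∈ T} = ∑ T ∈ F, #(s ∩ T) := by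
  simpa only [bipartiteAbove, bipartiteBelow, filter_mem_eq_inter] using
    sum_card_bipartiteAbove_eq_sum_card_bipartiteBelow (s := s) (t := F) (· ∈ ·)

lemma card_filter_image_univ_eq [Fintype ι] [DecidableEq ι] [Fintype α] {T : Finset α}
    (hT : #T = Fintype.card ι) :
    #{f : ι → α | univ.image f = T} = (Fintype.card ι).factorial := by
  have hι : Fintype.card ι = Fintype.card T := by rw [Fintype.card_coe, hT]
  rw [← Fintype.card_equiv (Fintype.equivOfCardEq hι), ← card_univ]
  symm
  refine card_bij (fun e _ i => (e i : α)) (fun e _ => ?_) (fun e _ e' _ h => ?_) fun f hf => ?_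
  · rw [mem_filter_univ]
    ext a
    simpa using ⟨by rintro ⟨i, rfl⟩; exact (e i).2, fun ha => ⟨e.symm ⟨a, ha⟩, by simp⟩⟩
  · ext i
    exact congrFun h i
  · rw [mem_filter_univ] at hf
    have hmem (i : ι) : f i ∈ T := hf ▸ mem_image_of_mem f (mem_univ i)
    have hsurj : Function.Surjective fun i => (⟨f i, hmem i⟩ : T) := by
      rintro ⟨a, ha⟩
      simpa [← hf] using ha
    exact ⟨.ofBijective _ ((Fintype.bijective_iff_surjective_and_card _).2 ⟨hsurj, hι⟩),
      mem_univ _, rfl⟩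

lemma card_filter_image_univ_mem [Fintype ι] [DecidableEq ι] [Fintype α] {F : Finset (Finset α)}
    (hF : ∀ T ∈ F, #T = Fintype.card ι) :
    #{f : ι → α | univ.image f ∈ F} = (Fintype.card ι).factorial * #F := by
  rw [card_eq_sum_card_fiberwise (f := fun f : ι → α => univ.image f) (t := F)
    (by simp [Set.MapsTo]), sum_congr rfl fun T hT => ?_, sum_const, smul_eq_mul, mul_comm]
  rw [← card_filter_image_univ_eq (hF T hT), filter_filter]
  congr! 2 with f
  exact and_iff_right_of_imp (· ▸ hT)

end Counting

section Trace

variable {n R : Type*} [Fintype n] [DecidableEq n] [CommSemiring R]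

lemma trace_add_pow_four_of_isIdempotentElem (A : Matrix n n R) {D : Matrix n n R}
    (hD : IsIdempotentElem D) :
    ((A + D) ^ 4).trace = (A ^ 4).trace + 4 * (A ^ 3 * D).trace + 4 * (A ^ 2 * D).trace
      + 2 * (A * D * A * D).trace + 4 * (A * D).trace + D.trace := by
  have hADA : (A * (D * A)).trace = (A * (A * D)).trace := by
    rw [← mul_assoc, trace_mul_comm]
  have hAADA : (A * (A * (D * A))).trace = (A * (A * (A * D))).trace := by
    simpa only [mul_assoc] using trace_mul_comm (A * (A * D)) A
  have hADAA : (A * (D * (A * A))).trace = (A * (A * (A * D))).trace := by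
    simpa only [mul_assoc] using trace_mul_comm (A * D) (A * A)
  simp only [pow_succ, pow_zero, one_mul, mul_add, add_mul, trace_add, mul_assoc, hD.eq,
    trace_mul_comm D, hADA, hAADA, hADAA]
  ring

end Trace

section LoopMatrix

variable {V : Type*} [DecidableEq V]

/-- The diagonal `0/1` matrix `D_S` of a vertex set `S`, that is, the contribution of the loops of
the self-loop graph `G_S` to its adjacency matrix `G.adjMatrix R + loopMatrix R S`. -/
def loopMatrix (R : Type*) [Zero R] [One R] (S : Finset V) : Matrix V V R :=
  diagonal fun v => if v ∈ S then 1 else 0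

variable [Fintype V] {R : Type*} [NonAssocSemiring R] (S : Finset V)

lemma isIdempotentElem_loopMatrix : IsIdempotentElem (loopMatrix R S) := by
  simp +contextual [IsIdempotentElem, loopMatrix, diagonal_mul_diagonal]

lemma trace_loopMatrix : (loopMatrix R S).trace = #S := by
  simp [loopMatrix]

lemma trace_mul_loopMatrix (M : Matrix V V R) : (M * loopMatrix R S).trace = ∑ v ∈ S, M v v := by
  simp [loopMatrix, trace, mul_diagonal]

end LoopMatrix

section CommonNeighbors

variable {V : Type*} [Fintype V] [DecidableEq V] (G : SimpleGraph V) [DecidableRel G.Adj]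

lemma sum_card_neighborFinset_inter :
    ∑ p : V × V, #(G.neighborFinset p.1 ∩ G.neighborFinset p.2) = ∑ v, G.degree v ^ 2 := by
  calc ∑ p : V × V, #(G.neighborFinset p.1 ∩ G.neighborFinset p.2)
      = ∑ v, #{p : V × V | v ∈ G.neighborFinset p.1 ∩ G.neighborFinset p.2} := by
        simpa only [bipartiteAbove, bipartiteBelow, filter_univ_mem] using
          sum_card_bipartiteAbove_eq_sum_card_bipartiteBelow (s := univ) (t := univ)
            fun (p : V × V) v => v ∈ G.neighborFinset p.1 ∩ G.neighborFinset p.2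
    _ = ∑ v, #(G.neighborFinset v ×ˢ G.neighborFinset v) := by
        congr! with v
        ext p
        simp [G.adj_comm]
    _ = ∑ v, G.degree v ^ 2 := by simp [sq]

variable {G} in
lemma card_filter_mem_cliqueFinset_three_of_adj {v w : V} (h : G.Adj v w) :
    #{T ∈ G.cliqueFinset 3 | v ∈ T ∧ w ∈ T} = #(G.neighborFinset v ∩ G.neighborFinset w) := by
  symm
  refine card_bij (fun u _ => {v, w, u}) (fun u hu => ?_) (fun u hu u' _ huu' => ?_)
    fun T hT => ?_
  · simp_all [SimpleGraph.is3Clique_triple_iff]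
  · have hmem : u ∈ ({v, w, u'} : Finset V) := huu' ▸ by simp
    simp only [mem_inter, SimpleGraph.mem_neighborFinset] at hu
    simpa [hu.1.ne', hu.2.ne'] using hmem
  · simp only [mem_filter, SimpleGraph.mem_cliqueFinset_iff] at hT
    obtain ⟨⟨hclique, hcard⟩, hv, hw⟩ := hT
    have hw' : w ∈ T.erase v := mem_erase.2 ⟨h.ne', hw⟩
    obtain ⟨u, hu⟩ : ∃ u, (T.erase v).erase w = {u} :=
      card_eq_one.1 (by rw [card_erase_of_mem hw', card_erase_of_mem hv, hcard])
    have hT : T = {v, w, u} := by rw [← hu, insert_erase hw', insert_erase hv]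
    obtain ⟨huw, huv, huT⟩ : u ≠ w ∧ u ≠ v ∧ u ∈ T := by
      simpa only [mem_erase] using hu.symm.subset (mem_singleton_self u)
    exact ⟨u, by simp [hclique hv huT huv.symm, hclique hw huT huw.symm], hT.symm⟩

lemma sum_card_neighborFinset_inter_eq_two_mul_card_cliqueFinset_three (v : V) :
    ∑ w ∈ G.neighborFinset v, #(G.neighborFinset v ∩ G.neighborFinset w)
      = 2 * #{T ∈ G.cliqueFinset 3 | v ∈ T} := by
  calc ∑ w ∈ G.neighborFinset v, #(G.neighborFinset v ∩ G.neighborFinset w)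
      = ∑ w ∈ G.neighborFinset v, #{T ∈ {T ∈ G.cliqueFinset 3 | v ∈ T} | w ∈ T} := by
        refine sum_congr rfl fun w hw => ?_
        rw [filter_filter, card_filter_mem_cliqueFinset_three_of_adj (by simpa using hw)]
    _ = ∑ T ∈ G.cliqueFinset 3 with v ∈ T, #(G.neighborFinset v ∩ T) :=
        sum_card_filter_mem_eq_sum_card_inter _ _
    _ = ∑ T ∈ G.cliqueFinset 3 with v ∈ T, 2 := by
        refine sum_congr rfl fun T hT => ?_
        simp only [mem_filter, SimpleGraph.mem_cliqueFinset_iff] at hT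
        obtain ⟨⟨hclique, hcard⟩, hv⟩ := hT
        have hinter : G.neighborFinset v ∩ T = T.erase v := by
          ext w
          simp only [mem_inter, SimpleGraph.mem_neighborFinset, mem_erase]
          exact and_congr_left fun hw => ⟨fun h => h.ne', fun h => hclique hv hw h.symm⟩
        rw [hinter, card_erase_of_mem hv, hcard]
    _ = 2 * #{T ∈ G.cliqueFinset 3 | v ∈ T} := by rw [sum_const, smul_eq_mul, mul_comm]

lemma sum_card_filter_mem_cliqueFinset_three (S : Finset V) :
    ∑ v ∈ S, #{T ∈ G.cliqueFinset 3 | v ∈ T}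
      = #{T ∈ G.cliqueFinset 3 | #(T ∩ S) = 1} + 2 * #{T ∈ G.cliqueFinset 3 | #(T ∩ S) = 2}
        + 3 * #{T ∈ G.cliqueFinset 3 | #(T ∩ S) = 3} := by
  have hlt : ∀ T ∈ G.cliqueFinset 3, #(T ∩ S) < 4 := fun T hT =>
    Nat.lt_succ_of_le <| (G.mem_cliqueFinset_iff.1 hT).card_eq ▸ card_le_card inter_subset_left
  simp only [sum_card_filter_mem_eq_sum_card_inter, inter_comm S]
  simp [sum_eq_sum_range_mul_card_filter_eq hlt, sum_range_succ]

end CommonNeighbors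

section LabelledCycle

variable {V : Type*}

/-- A labelled `k`-cycle of `G`: an injective closed walk indexed by `ℤ/k`. For `3 ≤ k` each
`k`-cycle subgraph has `2 * k` labellings. -/
def IsLabelledCycle (G : SimpleGraph V) {k : ℕ} (f : ZMod k → V) : Prop :=
  Function.Injective f ∧ ∀ i, G.Adj (f i) (f (i + 1))

instance [DecidableEq V] (G : SimpleGraph V) [DecidableRel G.Adj] {k : ℕ} [NeZero k] :
    DecidablePred (IsLabelledCycle G (k := k)) :=
  fun _ => inferInstanceAs (Decidable (_ ∧ _))

lemma isLabelledCycle_four_iff {G : SimpleGraph V} {f : ZMod 4 → V} :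
    IsLabelledCycle G f ↔ (f 0 ≠ f 2 ∧ f 1 ≠ f 3) ∧
      G.Adj (f 0) (f 1) ∧ G.Adj (f 1) (f 2) ∧ G.Adj (f 2) (f 3) ∧ G.Adj (f 3) (f 0) := by
  have hadj : (∀ i, G.Adj (f i) (f (i + 1))) ↔
      G.Adj (f 0) (f 1) ∧ G.Adj (f 1) (f 2) ∧ G.Adj (f 2) (f 3) ∧ G.Adj (f 3) (f 0) :=
    forall_zmod_four
  rw [IsLabelledCycle, hadj]
  refine and_congr_left fun ⟨h01, h12, h23, h30⟩ =>
    ⟨fun hf => ⟨hf.ne (by decide), hf.ne (by decide)⟩, fun ⟨h02, h13⟩ => ?_⟩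
  simp [Function.Injective, forall_zmod_four, h01.ne, h12.ne, h23.ne, h30.ne, h01.ne', h12.ne',
    h23.ne', h30.ne', h02, h13, h02.symm, h13.symm]

variable [Fintype V] [DecidableEq V] {G : SimpleGraph V} [DecidableRel G.Adj]

lemma image_univ_mem_cliqueFinset_iff {k : ℕ} [NeZero k] (hk : k ≠ 1) {f : ZMod k → V} :
    univ.image f ∈ G.cliqueFinset k ↔ IsLabelledCycle G f ∧ G.IsClique (Set.range f) := by
  rw [SimpleGraph.mem_cliqueFinset_iff, SimpleGraph.isNClique_iff, coe_image, coe_univ,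
    Set.image_univ, and_comm]
  refine and_congr_left fun hclique => ⟨fun hcard => ?_, fun hf => ?_⟩
  · have hinj : Function.Injective f := by
      rwa [← Set.injOn_univ, ← coe_univ, ← card_image_iff, card_univ, ZMod.card]
    have : Nontrivial (ZMod k) := ZMod.nontrivial_iff.2 hk
    exact ⟨hinj, fun i => hclique ⟨i, rfl⟩ ⟨i + 1, rfl⟩ (hinj.ne (by simp))⟩
  · rw [card_image_of_injective _ hf.1, card_univ, ZMod.card]

variable (G)

lemma card_isLabelledCycle {k : ℕ} [NeZero k] (hk : k ≠ 1) :
    #{f : ZMod k → V | IsLabelledCycle G f}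
      = Nat.card {f : ZMod k → V // IsLabelledCycle G f ∧ ¬ G.IsClique (Set.range f)}
        + k.factorial * #(G.cliqueFinset k) := by
  classical
  have hclique : #{f : ZMod k → V | IsLabelledCycle G f ∧ G.IsClique (Set.range f)}
      = k.factorial * #(G.cliqueFinset k) := by
    have hcard := card_filter_image_univ_mem (ι := ZMod k) (F := G.cliqueFinset k) fun T hT => by
      rw [ZMod.card, (G.mem_cliqueFinset_iff.1 hT).card_eq]
    simpa only [← image_univ_mem_cliqueFinset_iff hk, ZMod.card] using hcard
  rw [Nat.subtype_card {f : ZMod k → V | IsLabelledCycle G f ∧ ¬ G.IsClique (Set.range f)}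
    (by simp), ← hclique, add_comm, ← filter_filter, ← filter_filter,
    card_filter_add_card_filter_not]

lemma card_isLabelledCycle_four :
    #{f : ZMod 4 → V | IsLabelledCycle G f}
      = ∑ p ∈ univ.offDiag, #(G.neighborFinset p.1 ∩ G.neighborFinset p.2).offDiag := by
  rw [← card_sigma]
  refine card_bij' (fun f _ => ⟨(f 0, f 2), f 1, f 3⟩)
    (fun p _ => (![p.1.1, p.2.1, p.1.2, p.2.2] : Fin 4 → V)) (fun f hf => ?_) ?_
    (fun f _ => funext <| forall_zmod_four.2 ⟨rfl, rfl, rfl, rfl⟩) fun _ _ => rfl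
  · rw [mem_filter_univ, isLabelledCycle_four_iff] at hf
    simp [hf, hf.2.2.1.symm, hf.2.2.2.2.symm]
  · rintro ⟨⟨x, z⟩, y, w⟩ h
    obtain ⟨hxz, ⟨hxy, hzy⟩, ⟨hxw, hzw⟩, hyw⟩ :
        x ≠ z ∧ (G.Adj x y ∧ G.Adj z y) ∧ (G.Adj x w ∧ G.Adj z w) ∧ y ≠ w := by simpa using h
    exact (mem_filter_univ _).2 <|
      isLabelledCycle_four_iff.2 ⟨⟨hxz, hyw⟩, hxy, hzy.symm, hzw, hxw.symm⟩

lemma sum_card_neighborFinset_inter_sq :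
    ∑ p : V × V, #(G.neighborFinset p.1 ∩ G.neighborFinset p.2) ^ 2 + 2 * #G.edgeFinset
      = 2 * ∑ v, G.degree v ^ 2 + #{f : ZMod 4 → V | IsLabelledCycle G f} := by
  have hsum := sum_card_neighborFinset_inter G
  rw [← univ_product_univ, sum_product_self_eq_sum_add_sum_offDiag] at hsum ⊢
  simp only [inter_self, SimpleGraph.card_neighborFinset_eq_degree,
    G.sum_degrees_eq_twice_card_edges] at hsum ⊢
  simp only [← card_offDiag_add_card (_ ∩ _), sum_add_distrib, ← card_isLabelledCycle_four]
  linarith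

end LabelledCycle

section AdjMatrix

variable {V : Type*} [Fintype V] [DecidableEq V] (G : SimpleGraph V) [DecidableRel G.Adj]
  (R : Type*)

lemma adjMatrix_sq_apply [Semiring R] (v w : V) :
    (G.adjMatrix R ^ 2) v w = #(G.neighborFinset v ∩ G.neighborFinset w) := by
  simp [sq, inter_comm (G.neighborFinset v), ← filter_mem_eq_inter]

lemma adjMatrix_pow_three_apply_self [Semiring R] (v : V) :
    (G.adjMatrix R ^ 3) v v = 2 * #{T ∈ G.cliqueFinset 3 | v ∈ T} := by
  rw [pow_succ', SimpleGraph.adjMatrix_mul_apply]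
  simp only [adjMatrix_sq_apply, inter_comm _ (G.neighborFinset v)]
  exact_mod_cast congrArg (Nat.cast (R := R))
    (sum_card_neighborFinset_inter_eq_two_mul_card_cliqueFinset_three G v)

lemma adjMatrix_mul_loopMatrix_mul_adjMatrix_apply [Semiring R] (S : Finset V) (v w : V) :
    (G.adjMatrix R * loopMatrix R S * G.adjMatrix R : Matrix V V R) v w
      = #(G.neighborFinset v ∩ G.neighborFinset w ∩ S) := by
  simp [loopMatrix, mul_diagonal, inter_comm (G.neighborFinset v), ← filter_mem_eq_inter,
    filter_filter, ← ite_and, and_comm]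

lemma trace_adjMatrix_pow_four_eq_sum_sq [Semiring R] :
    (G.adjMatrix R ^ 4).trace
      = ∑ p : V × V, (#(G.neighborFinset p.1 ∩ G.neighborFinset p.2) : R) ^ 2 := by
  simp only [pow_add _ 2 2, Fintype.sum_prod_type, trace, diag_apply, mul_apply,
    adjMatrix_sq_apply]
  simp only [inter_comm, sq]

lemma trace_adjMatrix_pow_four [Ring R] :
    (G.adjMatrix R ^ 4).trace = 2 * (∑ v, (G.degree v : R) ^ 2 - #G.edgeFinset)
      + #{f : ZMod 4 → V | IsLabelledCycle G f} := by
  have hcount := congrArg (Nat.cast (R := R)) (sum_card_neighborFinset_inter_sq G)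
  push_cast at hcount
  rw [trace_adjMatrix_pow_four_eq_sum_sq, eq_sub_of_add_eq hcount, mul_sub]
  abel

variable (S : Finset V)

lemma trace_adjMatrix_mul_loopMatrix [NonAssocSemiring R] :
    (G.adjMatrix R * loopMatrix R S).trace = 0 := by
  simp [trace_mul_loopMatrix]

lemma trace_adjMatrix_sq_mul_loopMatrix [Semiring R] :
    (G.adjMatrix R ^ 2 * loopMatrix R S).trace = ∑ v ∈ S, (G.degree v : R) := by
  simp [trace_mul_loopMatrix, adjMatrix_sq_apply]

lemma trace_adjMatrix_pow_three_mul_loopMatrix [Semiring R] :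
    (G.adjMatrix R ^ 3 * loopMatrix R S).trace
      = 2 * (#{T ∈ G.cliqueFinset 3 | #(T ∩ S) = 1}
        + 2 * #{T ∈ G.cliqueFinset 3 | #(T ∩ S) = 2}
        + 3 * #{T ∈ G.cliqueFinset 3 | #(T ∩ S) = 3}) := by
  simp only [trace_mul_loopMatrix, adjMatrix_pow_three_apply_self, ← mul_sum]
  exact_mod_cast congrArg (fun t : ℕ => 2 * (t : R)) (sum_card_filter_mem_cliqueFinset_three G S)

lemma trace_adjMatrix_mul_loopMatrix_mul_adjMatrix_mul_loopMatrix [Ring R] :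
    (G.adjMatrix R * loopMatrix R S * G.adjMatrix R * loopMatrix R S).trace
      = ∑ v ∈ S, (G.degree v : R) - ∑ v ∈ S, (#(G.neighborFinset v \ S) : R) := by
  simp only [trace_mul_loopMatrix, adjMatrix_mul_loopMatrix_mul_adjMatrix_apply, inter_self,
    ← sum_sub_distrib, ← SimpleGraph.card_neighborFinset_eq_degree]
  refine sum_congr rfl fun v _ => eq_sub_of_add_eq ?_
  exact_mod_cast congrArg (Nat.cast (R := R)) (card_inter_add_card_sdiff (G.neighborFinset v) S)

end AdjMatrix

theorem closed_four_walks_selfLoop_general {V R : Type*} [Fintype V] [DecidableEq V] [CommRing R]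
    (G : SimpleGraph V) [DecidableRel G.Adj] (S : Finset V) (nsq : ℕ)
    (hnsq : 8 * nsq = Nat.card {f : ZMod 4 → V // Function.Injective f ∧
        (∀ i, G.Adj (f i) (f (i + 1))) ∧ ¬ G.IsClique (Set.range f)}) :
    ((G.adjMatrix R + loopMatrix R S) ^ 4).trace
      = #S + 2 * (∑ v, (G.degree v : R) ^ 2 - #G.edgeFinset) + 6 * ∑ v ∈ S, (G.degree v : R)
        - 2 * ∑ v ∈ S, (#(G.neighborFinset v \ S) : R)
        + 8 * (#{T ∈ G.cliqueFinset 3 | #(T ∩ S) = 1}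
            + 2 * #{T ∈ G.cliqueFinset 3 | #(T ∩ S) = 2}
            + 3 * #{T ∈ G.cliqueFinset 3 | #(T ∩ S) = 3}
            + nsq + 3 * #(G.cliqueFinset 4)) := by
  have hcycles : #{f : ZMod 4 → V | IsLabelledCycle G f} = 8 * nsq + 24 * #(G.cliqueFinset 4) := by
    simpa only [hnsq, IsLabelledCycle, and_assoc, show Nat.factorial 4 = 24 from rfl] using
      card_isLabelledCycle G (k := 4) (by decide)
  rw [trace_add_pow_four_of_isIdempotentElem _ (isIdempotentElem_loopMatrix S),
    trace_adjMatrix_pow_four, trace_adjMatrix_pow_three_mul_loopMatrix,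
    trace_adjMatrix_sq_mul_loopMatrix, trace_adjMatrix_mul_loopMatrix_mul_adjMatrix_mul_loopMatrix,
    trace_adjMatrix_mul_loopMatrix, trace_loopMatrix, hcycles]
  push_cast
  ring

/-- **Closed 4-walks on a self-loop graph.** For a connected simple graph `G` on `n ≥ 2`
vertices with `m ≥ 1` edges and `S ⊆ V(G)` with `|S| = σ`,
`Tr(A(G_S)^4) = σ + 2(M₁(G) - m) + 6 ∑_{v∈S} d_G(v) - 2 ∑_{v∈S} n₁(v)
  + 8 (n_{△1} + 2 n_{△2} + 3 n_{△3} + n_□(G) + 3 n_⊠(G))`,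
where `M₁(G) = ∑_v d_G(v)²` is the first Zagreb index, `n₁(v)` is the number of neighbors of
`v` not in `S`, `n_{△r}` is the number of triangles of `G` with exactly `r` vertices in `S`,
`n_⊠(G)` is the number of `4`-cliques, and `n_□(G)` is the number of `4`-cycles whose vertex
set is not a clique, where the number of such `4`-cycles is one eighth of the number of
injective maps `f : ℤ/4ℤ → V` with `f i` adjacent to `f (i+1)` for all `i` and range not a
clique. -/
theorem closed_four_walks_selfLoop {V : Type*} [Fintype V] [DecidableEq V]
    (G : SimpleGraph V) [DecidableRel G.Adj]
    (hconn : G.Connected) (hn : 2 ≤ Fintype.card V) (hm : 1 ≤ G.edgeFinset.card)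
    (S : Finset V) (nsq : ℕ)
    (hnsq : 8 * nsq = Nat.card {f : ZMod 4 → V // Function.Injective f ∧
        (∀ i, G.Adj (f i) (f (i + 1))) ∧ ¬ G.IsClique (Set.range f)}) :
    ((G.adjMatrix ℝ + Matrix.diagonal fun v => if v ∈ S then (1 : ℝ) else 0) ^ 4).trace
      = (S.card : ℝ)
        + 2 * ((∑ v, (G.degree v : ℝ) ^ 2) - (G.edgeFinset.card : ℝ))
        + 6 * (∑ v ∈ S, (G.degree v : ℝ))
        - 2 * (∑ v ∈ S, ((G.neighborFinset v \ S).card : ℝ))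
        + 8 * ((((G.cliqueFinset 3).filter fun T => (T ∩ S).card = 1).card : ℝ)
            + 2 * (((G.cliqueFinset 3).filter fun T => (T ∩ S).card = 2).card : ℝ)
            + 3 * (((G.cliqueFinset 3).filter fun T => (T ∩ S).card = 3).card : ℝ)
            + (nsq : ℝ)
            + 3 * ((G.cliqueFinset 4).card : ℝ)) :=
  closed_four_walks_selfLoop_general G S nsq hnsq
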